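/- arXiv:2011.12573 — 8 statements merged into one kernel-verified Lean document; each statement's English description precedes it below -/
import Mathlib

section
/- Let R be a commutative ring, n ≥ 1, and A an n×n matrix over R. Write c_i for the coefficient of x^i in the characteristic polynomial p_A(x) of A (so c_n = 1). Then for every k with 1 ≤ k ≤ n, one has k·c_{n-k} + Σ_{j=1}^{k} c_{n-k+j}·Tr(A^j) = 0, where Tr denotes the matrix trace. (This is the recursion underlying the Faddeev–Leverrier algorithm, stated in multiplied, division-free form.) -/
open Polynomial in
theorem deriv_charpoly_aux {R : Type*} [CommRing R] {n : ℕ} (A : Matrix (Fin n) (Fin n) R) :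
    derivative A.charpoly = Matrix.trace (Matrix.adjugate A.charmatrix) := by
  rw [Matrix.charpoly, Matrix.det_apply, derivative_sum, Matrix.trace]
  simp only [Matrix.diag_apply, Matrix.adjugate_apply, Matrix.det_apply]
  rw [Finset.sum_comm]
  refine Finset.sum_congr rfl fun σ _ => ?_
  rw [← Finset.smul_sum]
  have : ∀ q : R[X], derivative (Equiv.Perm.sign σ • q) = Equiv.Perm.sign σ • derivative q := by
    intro q
    rcases Int.units_eq_one_or (Equiv.Perm.sign σ) with h | h <;> simp [h]
  rw [this, derivative_prod_finset]
  congr 1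
  refine Eq.trans ?_ (Equiv.sum_comp σ _)
  refine Finset.sum_congr rfl fun i _ => ?_
  rw [← Finset.mul_prod_erase Finset.univ _ (Finset.mem_univ i), mul_comm]
  congr 1
  · by_cases h : σ i = i
    · simp [h]
    · have h' : i ≠ σ i := fun e => h e.symm
      simp [h, h', Matrix.charmatrix_apply_ne]
  · refine Finset.prod_congr rfl fun j hj => ?_
    have : σ j ≠ σ i := fun e => (Finset.ne_of_mem_erase hj) (σ.injective e)
    simp [Matrix.updateRow_ne this]

open Polynomial in
theorem trace_coeff_aux {R : Type*} [CommRing R] {n : ℕ} (A : Matrix (Fin n) (Fin n) R) (i : ℕ) :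
    ∃ N0, ∀ N, N0 ≤ N → A.charpoly.coeff (i+1) * ((i:R)+1) =
      ∑ j ∈ Finset.range N, A.charpoly.coeff (i+1+j) * Matrix.trace (A ^ j) := by
  set B := matPolyEquiv (Matrix.adjugate A.charmatrix) with hB
  have h1 : B * (X - C A) = A.charpoly.map (algebraMap R (Matrix (Fin n) (Fin n) R)) := by
    rw [hB, ← Matrix.matPolyEquiv_charmatrix, ← map_mul, Matrix.adjugate_mul, ← Matrix.charpoly,
      matPolyEquiv_smul_one]
  have h2 : ∀ m, B.coeff m - B.coeff (m+1) * A = A.charpoly.coeff (m+1) • 1 := by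
    intro m
    have := congrArg (fun q => q.coeff (m+1)) h1
    simpa [mul_sub, Algebra.algebraMap_eq_smul_one] using this
  have h3 : ∀ N, B.coeff i = ∑ j ∈ Finset.range N, A.charpoly.coeff (i+1+j) • A^j
      + B.coeff (i+N) * A^N := by
    intro N
    induction N with
    | zero => simp
    | succ N ih =>
      rw [ih, Finset.sum_range_succ, add_assoc]
      congr 1
      have := h2 (i+N)
      rw [sub_eq_iff_eq_add] at this
      rw [this, add_mul, mul_assoc, ← pow_succ', smul_mul_assoc, one_mul, add_right_comm i 1 N,
        add_assoc i N 1]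
  refine ⟨B.natDegree + 1, fun N hN => ?_⟩
  have h4 := congrArg Matrix.trace (h3 N)
  rw [coeff_eq_zero_of_natDegree_lt (by omega : B.natDegree < i + N), zero_mul, add_zero,
    Matrix.trace_sum] at h4
  simp only [Matrix.trace_smul, smul_eq_mul] at h4
  rw [← h4, ← coeff_derivative, deriv_charpoly_aux]
  simp [Matrix.trace, hB, matPolyEquiv_coeff_apply]

theorem stmt0 {R : Type*} [CommRing R] {n : ℕ} (hn : 1 ≤ n)
    (A : Matrix (Fin n) (Fin n) R) :
    ∀ k, 1 ≤ k → k ≤ n →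
      (k : R) * A.charpoly.coeff (n - k)
        + ∑ j ∈ Finset.Icc 1 k, A.charpoly.coeff (n - k + j) * Matrix.trace (A ^ j) = 0 := by
  intro k hk hkn
  nontriviality R
  have hdeg : A.charpoly.natDegree = n := by simp [Matrix.charpoly_natDegree_eq_dim]
  have hs : ∀ f : ℕ → R, ∑ j ∈ Finset.range (k+1), f j = f 0 + ∑ j ∈ Finset.Icc 1 k, f j := by
    intro f
    rw [Finset.range_eq_Ico, Finset.sum_eq_sum_Ico_succ_bot (by omega)]
    rfl
  have key : A.charpoly.coeff (n-k) * ((n:R) - k) =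
      ∑ j ∈ Finset.range (k+1), A.charpoly.coeff (n-k+j) * Matrix.trace (A ^ j) := by
    rcases hkn.lt_or_eq with h | h
    · obtain ⟨i, rfl⟩ : ∃ i, n = i + 1 + k := ⟨n - k - 1, by omega⟩
      obtain ⟨N0, hN⟩ := trace_coeff_aux A i
      have := hN (N0 + k + 1) (by omega)
      rw [Nat.add_sub_cancel]
      have e : ((i + 1 + k : ℕ) : R) - k = i + 1 := by push_cast; ring
      rw [e, this]
      symm
      apply Finset.sum_subset
      · intro x; simp; omega
      · intro x _ hx
        rw [Polynomial.coeff_eq_zero_of_natDegree_lt, zero_mul]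
        simp at hx
        omega
    · subst h
      have := congrArg Matrix.trace (Matrix.aeval_self_charpoly A)
      rw [Polynomial.aeval_eq_sum_range, hdeg, Matrix.trace_sum] at this
      simpa using this.symm
  rw [hs] at key
  simp only [add_zero, pow_zero, Matrix.trace_one, Fintype.card_fin] at key
  linear_combination -key
end

section
/- Let R be a commutative ring, n ≥ 1, and A an n×n matrix over R with characteristic polynomial coefficients c_i and Faddeev–Leverrier matrices B_k (B_0 = I, B_k = A·B_{k-1} + c_{n-k}·I). Then for every k with 0 ≤ k ≤ n, Tr(B_k) = (n−k)·c_{n−k}. -/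
noncomputable def flSeq {R : Type*} [CommRing R] {n : ℕ}
    (A : Matrix (Fin n) (Fin n) R) : ℕ → Matrix (Fin n) (Fin n) R
  | 0 => 1
  | k + 1 => A * flSeq A k + (A.charpoly.coeff (n - (k + 1))) • 1

theorem aux_deriv {R : Type*} [CommRing R] {n : ℕ} (A : Matrix (Fin n) (Fin n) R) :
    Polynomial.derivative A.charpoly = (A.charmatrix.adjugate).trace := by
  unfold Matrix.charpoly Matrix.trace
  rw [← Matrix.det_transpose, Matrix.det_apply, Polynomial.derivative_sum]
  simp only [Matrix.diag_apply, Matrix.adjugate_apply]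
  have h : ∀ i, (A.charmatrix.updateRow i (Pi.single i 1)).det =
      ∑ σ : Equiv.Perm (Fin n), Equiv.Perm.sign σ •
        ((∏ j ∈ Finset.univ.erase i, A.charmatrix j (σ j)) *
          Polynomial.derivative (A.charmatrix i (σ i))) := by
    intro i
    rw [← Matrix.det_transpose, Matrix.det_apply]
    refine Finset.sum_congr rfl fun σ _ => ?_
    congr 1
    rw [← Finset.prod_erase_mul _ _ (Finset.mem_univ i)]
    congr 1
    · refine Finset.prod_congr rfl fun j hj => ?_
      simp [Matrix.updateRow_apply, Finset.ne_of_mem_erase hj]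
    · by_cases hi : σ i = i
      · simp [hi]
      · simp [Matrix.charmatrix_apply_ne _ _ _ (Ne.symm hi), hi]
  simp only [h]
  rw [Finset.sum_comm]
  refine Finset.sum_congr rfl fun σ _ => ?_
  rw [← Finset.smul_sum]
  simp only [Units.smul_def, Polynomial.derivative_smul, Polynomial.derivative_prod_finset,
    Matrix.transpose_apply]

/-- coefficient matrices of the adjugate of the characteristic matrix -/
noncomputable def adjCoeff {R : Type*} [CommRing R] {n : ℕ} (A : Matrix (Fin n) (Fin n) R)
    (j : ℕ) : Matrix (Fin n) (Fin n) R :=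
  A.charmatrix.adjugate.map (fun p => p.coeff j)

theorem aux_eq {R : Type*} [CommRing R] {n : ℕ} (A : Matrix (Fin n) (Fin n) R) (a b : Fin n) :
    Polynomial.X * A.charmatrix.adjugate a b =
      ∑ c, Polynomial.C (A a c) * A.charmatrix.adjugate c b
        + A.charpoly * (1 : Matrix (Fin n) (Fin n) (Polynomial R)) a b := by
  have h := congrFun (congrFun (Matrix.mul_adjugate A.charmatrix) a) b
  rw [← Matrix.charpoly, Matrix.smul_apply, smul_eq_mul] at h
  rw [← h]
  nth_rewrite 3 [Matrix.charmatrix]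
  rw [sub_mul, Matrix.sub_apply]
  simp [Matrix.mul_apply, Matrix.diagonal_apply]

theorem adjCoeff_succ {R : Type*} [CommRing R] {n : ℕ} (A : Matrix (Fin n) (Fin n) R) (j : ℕ) :
    adjCoeff A j = A * adjCoeff A (j+1) + A.charpoly.coeff (j+1) • 1 := by
  ext a b
  have h := congrArg (fun p => Polynomial.coeff p (j+1)) (aux_eq A a b)
  by_cases hab : a = b <;>
  simpa [Polynomial.coeff_X_mul, Polynomial.finsetSum_coeff, Matrix.mul_apply, adjCoeff,
    Matrix.one_apply, hab] using h

theorem adjCoeff_zero {R : Type*} [CommRing R] {n : ℕ} (A : Matrix (Fin n) (Fin n) R) :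
    A * adjCoeff A 0 + A.charpoly.coeff 0 • 1 = 0 := by
  ext a b
  have h := (congrArg (fun p => Polynomial.coeff p 0) (aux_eq A a b)).symm
  by_cases hab : a = b <;>
  simpa [Polynomial.finsetSum_coeff, Matrix.mul_apply,
    adjCoeff, Matrix.one_apply, hab] using h

theorem adjCoeff_large {R : Type*} [CommRing R] {n : ℕ} (A : Matrix (Fin n) (Fin n) R) (j : ℕ)
    (hj : n ≤ j) : adjCoeff A j = 0 := by
  obtain ⟨N, hN⟩ : ∃ N, ∀ m, N ≤ m → adjCoeff A m = 0 := by
    refine ⟨(∑ a, ∑ b, (A.charmatrix.adjugate a b).natDegree) + 1, fun m hm => ?_⟩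
    ext a b
    refine Polynomial.coeff_eq_zero_of_natDegree_lt ?_
    have h1 := Finset.single_le_sum (f := fun b => (A.charmatrix.adjugate a b).natDegree)
      (fun _ _ => Nat.zero_le _) (Finset.mem_univ b)
    have h2 := Finset.single_le_sum (f := fun a => ∑ b, (A.charmatrix.adjugate a b).natDegree)
      (fun _ _ => Nat.zero_le _) (Finset.mem_univ a)
    exact Nat.lt_of_lt_of_le (Nat.lt_succ_of_le (h1.trans h2)) hm
  have key : ∀ d j, n ≤ j → N ≤ j + d → adjCoeff A j = 0 := by
    intro d
    induction d with
    | zero => intro j _ h; exact hN j h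
    | succ d ih =>
      intro j hj h
      nontriviality R
      rw [adjCoeff_succ, ih (j+1) (by omega) (by omega),
        Polynomial.coeff_eq_zero_of_natDegree_lt]
      · simp
      · rw [Matrix.charpoly_natDegree_eq_dim]; simp; omega
  exact key N j hj (by omega)

theorem flSeq_eq {R : Type*} [CommRing R] {n : ℕ} (A : Matrix (Fin n) (Fin n) R) (k : ℕ)
    (hk : k < n) : flSeq A k = adjCoeff A (n - (k+1)) := by
  induction k with
  | zero =>
    nontriviality R
    rw [adjCoeff_succ, adjCoeff_large A _ (by omega)]
    have h := A.charpoly_monic.coeff_natDegree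
    rw [Matrix.charpoly_natDegree_eq_dim, Fintype.card_fin] at h
    rw [show n - (0+1) + 1 = n by omega, h]
    simp [flSeq]
  | succ k ih =>
    rw [flSeq, ih (by omega), adjCoeff_succ A (n - (k+1+1)),
      show n - (k+1+1) + 1 = n - (k+1) by omega]

theorem stmt2 {R : Type*} [CommRing R] {n : ℕ} (hn : 1 ≤ n)
    (A : Matrix (Fin n) (Fin n) R) :
    ∀ k ≤ n, Matrix.trace (flSeq A k) = ((n - k : ℕ) : R) * A.charpoly.coeff (n - k) := by
  intro k hk
  rcases hk.lt_or_eq with h | h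
  · rw [flSeq_eq A k h]
    have h1 := congrArg (fun p => Polynomial.coeff p (n - (k+1))) (aux_deriv A)
    simp only [Polynomial.coeff_derivative, Matrix.trace, Polynomial.finsetSum_coeff] at h1
    rw [show n - (k+1) + 1 = n - k by omega] at h1
    rw [show ((n - k : ℕ) : R) = ((n - (k+1) : ℕ) : R) + 1 by
      rw [← Nat.cast_succ]; congr 1; omega, mul_comm, h1]
    rfl
  · subst h
    obtain ⟨m, rfl⟩ : ∃ m, k = m + 1 := ⟨k - 1, by omega⟩
    rw [flSeq, flSeq_eq A m (by omega), Nat.sub_self, adjCoeff_zero]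
    simp
end

section
/- Let R be a commutative ring, n ≥ 1, and A an n×n matrix over R with characteristic polynomial coefficients c_i and Faddeev–Leverrier matrices B_k (B_0 = I, B_k = A·B_{k-1} + c_{n-k}·I). Then for every k with 1 ≤ k ≤ n, k·c_{n−k} = −Tr(A·B_{k−1}). (This is the trace-extraction step of the Faddeev–Leverrier algorithm in multiplied, division-free form.) -/
open Polynomial Matrix in
theorem fl_derivative_charpoly {R : Type*} [CommRing R] {n : ℕ}
    (A : Matrix (Fin n) (Fin n) R) :
    derivative A.charpoly = Matrix.trace (adjugate (charmatrix A)) := by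
  have h1 : ∀ i, adjugate (charmatrix A) i i
      = ∑ σ : Equiv.Perm (Fin n), (Equiv.Perm.sign σ : ℤ) •
          ((∏ j ∈ Finset.univ.erase i, (charmatrix A) (σ j) j) *
            derivative (charmatrix A (σ i) i)) := by
    intro i
    have : adjugate (charmatrix A) i i = det ((charmatrix A).updateCol i (Pi.single i 1)) := by
      rw [← transpose_apply (adjugate (charmatrix A)), adjugate_transpose, adjugate_apply,
        updateRow_transpose, det_transpose]
    rw [this, det_apply]
    refine Finset.sum_congr rfl fun σ _ => ?_
    rw [Units.smul_def]
    congr 1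
    rw [← Finset.prod_erase_mul _ _ (Finset.mem_univ i)]
    congr 1
    · refine Finset.prod_congr rfl fun j hj => ?_
      rw [updateCol_ne (Finset.ne_of_mem_erase hj)]
    · rw [updateCol_self]
      by_cases h : σ i = i
      · simp [h, charmatrix_apply]
      · simp [charmatrix_apply, h]
  rw [Matrix.trace, Matrix.charpoly, det_apply]
  simp only [diag_apply, h1]
  rw [Finset.sum_comm, derivative_sum]
  refine Finset.sum_congr rfl fun σ _ => ?_
  rw [Units.smul_def, derivative_smul, derivative_prod_finset, Finset.smul_sum]

open Polynomial Matrix in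
theorem stmt3 {R : Type*} [CommRing R] {n : ℕ} (hn : 1 ≤ n)
    (A : Matrix (Fin n) (Fin n) R) :
    ∀ k, 1 ≤ k → k ≤ n →
      (k : R) * A.charpoly.coeff (n - k) = - Matrix.trace (A * flSeq A (k - 1)) := by
  nontriviality R
  have : Nonempty (Fin n) := ⟨⟨0, hn⟩⟩
  set Q := matPolyEquiv (adjugate (charmatrix A)) with hQ
  have hmul : (X - C A) * Q = A.charpoly.map (algebraMap R (Matrix (Fin n) (Fin n) R)) := by
    rw [hQ, ← matPolyEquiv_charmatrix, ← map_mul, mul_adjugate, ← Matrix.charpoly,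
      matPolyEquiv_smul_one]
  have hdeg : A.charpoly.natDegree = n := by simp
  have hcn : A.charpoly.coeff n = 1 := by
    have := A.charpoly_monic.coeff_natDegree
    rwa [hdeg] at this
  have hrec : ∀ m, Q.coeff m = A * Q.coeff (m+1) + A.charpoly.coeff (m+1) • 1 := by
    intro m
    have := congrArg (fun q => q.coeff (m+1)) hmul
    simp only [sub_mul, coeff_sub, coeff_X_mul, coeff_C_mul, coeff_map,
      Algebra.algebraMap_eq_smul_one] at this
    rw [← this]; abel
  have h0 : A * Q.coeff 0 + A.charpoly.coeff 0 • 1 = 0 := by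
    have := congrArg (fun q => q.coeff 0) hmul
    simp only [sub_mul, coeff_sub, coeff_X_mul_zero, coeff_C_mul, coeff_map,
      Algebra.algebraMap_eq_smul_one] at this
    rw [← this]; abel
  have hzero : Q.coeff n = 0 := by
    have hz : ∀ j, Q.coeff n = A ^ j * Q.coeff (n + j) := by
      intro j
      induction j with
      | zero => simp
      | succ j ih =>
        rw [ih, hrec (n+j), coeff_eq_zero_of_natDegree_lt (p := A.charpoly) (by omega)]
        simp [pow_succ, mul_assoc, add_assoc]
    rw [hz (Q.natDegree + 1), coeff_eq_zero_of_natDegree_lt (p := Q) (by omega), mul_zero]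
  have hB : ∀ k, k < n → flSeq A k = Q.coeff (n - 1 - k) := by
    intro k
    induction k with
    | zero =>
      intro _
      rw [hrec, show n - 1 - 0 + 1 = n by omega, hzero, hcn]
      simp [flSeq]
    | succ k ih =>
      intro hk
      rw [hrec, show n - 1 - (k+1) + 1 = n - 1 - k by omega, ← ih (by omega), flSeq,
        show n - (k+1) = n - 1 - k by omega]
  have htr : ∀ m, Matrix.trace (Q.coeff m) = A.charpoly.coeff (m+1) * (m+1) := by
    intro m
    rw [← coeff_derivative, fl_derivative_charpoly]
    simp [Matrix.trace, hQ, matPolyEquiv_coeff_apply]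
  intro k hk hkn
  obtain ⟨k, rfl⟩ : ∃ j, k = j + 1 := ⟨k - 1, by omega⟩
  rw [Nat.add_sub_cancel, hB k (by omega)]
  rcases Nat.lt_or_ge (k+1) n with h | h
  · obtain ⟨m, rfl⟩ : ∃ m, n = m + 1 + (k + 1) := ⟨n - 1 - (k+1), by omega⟩
    have e := congrArg Matrix.trace (hrec m)
    rw [htr, trace_add, trace_smul, trace_one] at e
    rw [show m + 1 + (k+1) - 1 - k = m + 1 by omega, Nat.add_sub_cancel]
    simp only [Fintype.card_fin, smul_eq_mul] at e
    push_cast at e ⊢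
    linear_combination -e
  · obtain rfl : n = k + 1 := by omega
    have e := congrArg Matrix.trace h0
    rw [trace_add, trace_smul, trace_one] at e
    simp only [Fintype.card_fin, smul_eq_mul, trace_zero] at e
    simp only [Nat.add_sub_cancel, Nat.sub_self]
    linear_combination e
end

section
/- Let R be a commutative ring, n ≥ 1, and A an n×n matrix over R with characteristic polynomial coefficients c_i and Faddeev–Leverrier matrices B_k (B_0 = I, B_k = A·B_{k-1} + c_{n-k}·I). Then the adjugate matrix of A satisfies adj(A) = (−1)^{n+1}·B_{n−1}; equivalently, adj(A) = (−1)^{n+1}·Σ_{j=0}^{n−1} c_{j+1}·A^j. -/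
theorem fl_sum {R : Type*} [CommRing R] [Nontrivial R] {n : ℕ}
    (A : Matrix (Fin n) (Fin n) R) (k : ℕ) (hk : k ≤ n) :
    flSeq A k = ∑ j ∈ Finset.range (k + 1), A.charpoly.coeff (n - k + j) • A ^ j := by
  induction k with
  | zero =>
    have h : A.charpoly.coeff n = 1 := by
      have h1 := A.charpoly_monic.coeff_natDegree
      rwa [Matrix.charpoly_natDegree_eq_dim, Fintype.card_fin] at h1
    simp [flSeq, h]
  | succ k ih =>
    rw [flSeq, ih (by omega), Finset.sum_range_succ' _ (k + 1), Finset.mul_sum]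
    congr 1
    · apply Finset.sum_congr rfl
      intro j _
      rw [Matrix.mul_smul, ← pow_succ', show n - (k + 1) + (j + 1) = n - k + j by omega]

open Polynomial in
theorem adj_sum {R : Type*} [CommRing R] [Nontrivial R] {n : ℕ} (hn : 1 ≤ n)
    (A : Matrix (Fin n) (Fin n) R) :
    A.adjugate = ((-1 : R) ^ (n + 1)) •
        ∑ j ∈ Finset.range n, A.charpoly.coeff (j + 1) • A ^ j := by
  set P := matPolyEquiv (A.charmatrix.adjugate) with hP
  have h : matPolyEquiv (A.charpoly • (1 : Matrix (Fin n) (Fin n) R[X])) = P * (X - C A) := by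
    rw [hP, ← Matrix.matPolyEquiv_charmatrix, ← map_mul, Matrix.adjugate_mul]
    rfl
  rw [matPolyEquiv_smul_one] at h
  have hc : ∀ k, P.coeff k = P.coeff (k + 1) * A + A.charpoly.coeff (k + 1) • 1 := by
    intro k
    have h1 := congrArg (fun q => q.coeff (k + 1)) h
    simp only [mul_sub, coeff_sub, coeff_mul_X, coeff_mul_C, coeff_map] at h1
    rw [Algebra.algebraMap_eq_smul_one] at h1
    rw [h1]; abel
  have hs : ∀ N, P.coeff 0 = P.coeff N * A ^ N +
      ∑ j ∈ Finset.range N, A.charpoly.coeff (j + 1) • A ^ j := by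
    intro N
    induction N with
    | zero => simp
    | succ N ih =>
      rw [ih, Finset.sum_range_succ, hc N, add_mul, mul_assoc, ← pow_succ', smul_mul_assoc, one_mul]
      abel
  have h0 : P.coeff 0 = ∑ j ∈ Finset.range n, A.charpoly.coeff (j + 1) • A ^ j := by
    have h2 := hs (n + (P.natDegree + 1))
    rw [coeff_eq_zero_of_natDegree_lt (show P.natDegree < n + (P.natDegree + 1) by omega), zero_mul, zero_add, Finset.sum_range_add] at h2
    rw [h2, add_eq_left]
    apply Finset.sum_eq_zero
    intro j _
    rw [coeff_eq_zero_of_natDegree_lt, zero_smul]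
    rw [Matrix.charpoly_natDegree_eq_dim, Fintype.card_fin]
    omega
  have h3 : P.coeff 0 = (-A).adjugate := by
    have h4 : (evalRingHom (0 : R)).mapMatrix A.charmatrix = -A := by
      ext i j
      by_cases hij : i = j
      · subst hij; simp [Matrix.charmatrix_apply]
      · simp [Matrix.charmatrix_apply, hij]
    rw [← h4, ← RingHom.map_adjugate]
    ext i j
    rw [hP, matPolyEquiv_coeff_apply]
    simp [coeff_zero_eq_eval_zero]
  rw [← h0, h3, ← neg_one_smul R A, Matrix.adjugate_smul, smul_smul, ← pow_add, Fintype.card_fin,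
    Even.neg_one_pow, one_smul]
  exact ⟨n, by omega⟩

theorem stmt5 {R : Type*} [CommRing R] {n : ℕ} (hn : 1 ≤ n)
    (A : Matrix (Fin n) (Fin n) R) :
    A.adjugate = ((-1 : R) ^ (n + 1)) • flSeq A (n - 1) ∧
      A.adjugate = ((-1 : R) ^ (n + 1)) •
        ∑ j ∈ Finset.range n, A.charpoly.coeff (j + 1) • A ^ j := by
  rcases subsingleton_or_nontrivial R with hR | hR
  · exact ⟨Subsingleton.elim _ _, Subsingleton.elim _ _⟩
  · refine ⟨?_, adj_sum hn A⟩
    rw [adj_sum hn A, fl_sum A (n - 1) (by omega), show n - 1 + 1 = n by omega]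
    congr 1
    apply Finset.sum_congr rfl
    intro j _
    rw [show n - (n - 1) + j = j + 1 by omega]
end

section
/- Let R be a commutative ring, n ≥ 1, and A an n×n matrix over R with characteristic polynomial coefficients c_i and Faddeev–Leverrier matrices B_k (B_0 = I, B_k = A·B_{k-1} + c_{n-k}·I). Then Tr(A·B_{n−1}) = −n·c_0; equivalently, Tr(A·B_{n−1}) = (−1)^{n+1}·n·det(A). -/
theorem flSeq_eq_sum {R : Type*} [CommRing R] {n : ℕ}
    (A : Matrix (Fin n) (Fin n) R) (hc : A.charpoly.coeff n = 1) (k : ℕ) :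
    flSeq A k = ∑ j ∈ Finset.range (k + 1), A.charpoly.coeff (n - j) • A ^ (k - j) := by
  induction k with
  | zero => simp [flSeq, hc]
  | succ k ih =>
    rw [flSeq, ih, Finset.sum_range_succ _ (k + 1), Finset.mul_sum]
    congr 1
    · refine Finset.sum_congr rfl fun j hj => ?_
      have : j ≤ k := by simpa [Nat.lt_succ_iff] using hj
      rw [Nat.succ_sub this, pow_succ', mul_smul_comm]
    · simp

theorem flSeq_last {R : Type*} [CommRing R] [Nontrivial R] {n : ℕ}
    (A : Matrix (Fin n) (Fin n) R) : flSeq A n = 0 := by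
  have hd : A.charpoly.natDegree = n := by simp [Matrix.charpoly_natDegree_eq_dim]
  have hc : A.charpoly.coeff n = 1 := by
    have := A.charpoly_monic.coeff_natDegree
    rwa [hd] at this
  rw [flSeq_eq_sum A hc]
  have h := A.aeval_self_charpoly
  rw [Polynomial.aeval_eq_sum_range, hd, ← Finset.sum_range_reflect] at h
  simpa using h

theorem stmt6 {R : Type*} [CommRing R] {n : ℕ} (hn : 1 ≤ n)
    (A : Matrix (Fin n) (Fin n) R) :
    Matrix.trace (A * flSeq A (n - 1)) = -((n : R) * A.charpoly.coeff 0) ∧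
      Matrix.trace (A * flSeq A (n - 1)) = (-1 : R) ^ (n + 1) * (n : R) * A.det := by
  nontriviality R
  have key : Matrix.trace (A * flSeq A (n - 1)) = -((n : R) * A.charpoly.coeff 0) := by
    obtain ⟨m, rfl⟩ : ∃ m, n = m + 1 := ⟨n - 1, by omega⟩
    have h := flSeq_last A
    rw [flSeq, Nat.sub_self] at h
    rw [Nat.add_sub_cancel, eq_neg_of_add_eq_zero_left h, Matrix.trace_neg, Matrix.trace_smul,
      Matrix.trace_one, Fintype.card_fin, smul_eq_mul, mul_comm]
  refine ⟨key, ?_⟩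
  rw [key, A.det_eq_sign_charpoly_coeff, Fintype.card_fin, pow_succ]
  have h2 : (-1 : R) ^ n * (-1) ^ n = 1 := by rw [← mul_pow]; simp
  linear_combination (n : R) * A.charpoly.coeff 0 * h2
end

section
/- Let R be a commutative ring, n ≥ 1, and A an n×n matrix over R with characteristic polynomial coefficients c_i and Faddeev–Leverrier matrices B_k (B_0 = I, B_k = A·B_{k-1} + c_{n-k}·I). Then in the ring of n×n matrices over the polynomial ring R[x], the adjugate of the characteristic matrix x·I − A satisfies adj(x·I − A) = Σ_{k=0}^{n−1} B_k·x^{n−1−k}, where each B_k is regarded as a matrix of constant polynomials. -/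
open Polynomial in
noncomputable def flP {R : Type*} [CommRing R] (n : ℕ) (p : R[X]) (m : ℕ) : R[X] :=
  ∑ k ∈ Finset.range (m + 1), X ^ (m - k) * C (p.coeff (n - k))

open Polynomial in
theorem flP_succ {R : Type*} [CommRing R] (n : ℕ) (p : R[X]) (m : ℕ) :
    flP n p (m + 1) = X * flP n p m + C (p.coeff (n - (m + 1))) := by
  unfold flP
  rw [Finset.sum_range_succ _ (m + 1), Finset.mul_sum]
  congr 1
  · apply Finset.sum_congr rfl
    intro k hk
    have : m + 1 - k = (m - k) + 1 := by
      have := Finset.mem_range.1 hk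
      omega
    rw [this, pow_succ']
    ring
  · simp

open Polynomial in
theorem flP_self {R : Type*} [CommRing R] (n : ℕ) (p : R[X]) (h : p.natDegree ≤ n) :
    flP n p n = p := by
  unfold flP
  conv_rhs => rw [p.as_sum_range_C_mul_X_pow' (Nat.lt_succ_of_le h)]
  rw [← Finset.sum_range_reflect]
  apply Finset.sum_congr rfl
  intro k hk
  have h1 := Finset.mem_range.1 hk
  have h2 : n - (n + 1 - 1 - k) = k := by omega
  rw [h2, mul_comm]

open Polynomial in
theorem fl_coeff {R : Type*} [CommRing R] {n : ℕ}
    (A : Matrix (Fin n) (Fin n) R) : A.charpoly.coeff n = 1 := by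
  nontriviality R
  have h := A.charpoly_monic
  have h2 := A.charpoly_natDegree_eq_dim
  rw [Fintype.card_fin] at h2
  rw [Monic, leadingCoeff, h2] at h
  exact h

open Polynomial in
theorem fl_deg {R : Type*} [CommRing R] {n : ℕ}
    (A : Matrix (Fin n) (Fin n) R) : A.charpoly.natDegree ≤ n := by
  nontriviality R
  have h2 := A.charpoly_natDegree_eq_dim
  rw [Fintype.card_fin] at h2
  exact h2.le

open Polynomial in
theorem fl_aeval {R : Type*} [CommRing R] {n : ℕ}
    (A : Matrix (Fin n) (Fin n) R) (m : ℕ) : aeval A (flP n A.charpoly m) = flSeq A m := by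
  induction m with
  | zero => simp [flP, flSeq, fl_coeff]
  | succ m ih => rw [flP_succ, map_add, map_mul, ih, aeval_X, aeval_C, flSeq,
      Algebra.algebraMap_eq_smul_one]

open Polynomial in
theorem fl_mul {R : Type*} [CommRing R] {n : ℕ}
    (A : Matrix (Fin n) (Fin n) R) (m : ℕ) :
    Matrix.charmatrix A * ∑ k ∈ Finset.range m, (X : R[X]) ^ (m - 1 - k) • (flSeq A k).map C
      = flP n A.charpoly m • 1 - (flSeq A m).map C := by
  induction m with
  | zero => simp [flP, flSeq, fl_coeff]
  | succ m ih =>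
    have hS : ∑ k ∈ Finset.range (m + 1), (X : R[X]) ^ (m + 1 - 1 - k) • (flSeq A k).map C
        = (X : R[X]) • (∑ k ∈ Finset.range m, (X : R[X]) ^ (m - 1 - k) • (flSeq A k).map C)
          + (flSeq A m).map C := by
      rw [Finset.sum_range_succ, Finset.smul_sum]
      congr 1
      · apply Finset.sum_congr rfl
        intro k hk
        have : m + 1 - 1 - k = (m - 1 - k) + 1 := by
          have := Finset.mem_range.1 hk
          omega
        rw [this, pow_succ', smul_smul]
      · simp
    have hB : (flSeq A (m + 1)).map C = A.map C * (flSeq A m).map C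
        + (C (A.charpoly.coeff (n - (m + 1))) : R[X]) • (1 : Matrix (Fin n) (Fin n) R[X]) := by
      rw [flSeq]
      ext1 i j
      by_cases h : i = j <;> simp [Matrix.mul_apply, h]
    have hM : Matrix.charmatrix A = (X : R[X]) • (1 : Matrix (Fin n) (Fin n) R[X]) - A.map C := by
      ext1 i j
      by_cases h : i = j <;> simp [Matrix.charmatrix_apply, Matrix.one_apply, h]
    rw [hS, mul_add, mul_smul_comm, ih, hB, flP_succ, hM, sub_mul, smul_mul_assoc, one_mul,
      smul_sub, add_smul, smul_smul]
    abel

theorem stmt7 {R : Type*} [CommRing R] {n : ℕ} (hn : 1 ≤ n)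
    (A : Matrix (Fin n) (Fin n) R) :
    (Matrix.charmatrix A).adjugate =
      ∑ k ∈ Finset.range n,
        (Polynomial.X : Polynomial R) ^ (n - 1 - k) • (flSeq A k).map Polynomial.C := by
  have h0 : flSeq A n = 0 := by
    rw [← fl_aeval, flP_self _ _ (fl_deg A), Matrix.aeval_self_charpoly]
  have h1 := fl_mul A n
  rw [h0, flP_self _ _ (fl_deg A), Matrix.map_zero _ (Polynomial.C_0), sub_zero] at h1
  have h2 := Matrix.mul_adjugate (Matrix.charmatrix A)
  have h3 := h2.trans h1.symm
  apply matPolyEquiv.injective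
  apply (Polynomial.monic_X_sub_C A).isRegular.left
  simp only
  rw [← Matrix.matPolyEquiv_charmatrix, ← map_mul, ← map_mul, h3]
end

section
/- Let R be a commutative ℚ-algebra, n ≥ 1, and A an n×n matrix over R. Define sequences recursively by d_n = 1, B'_0 = I, and for 1 ≤ k ≤ n: d_{n−k} = −(1/k)·Tr(A·B'_{k−1}) and B'_k = A·B'_{k−1} + d_{n−k}·I. Then adj(A) = (−1)^{n+1}·B'_{n−1}. (Correctness of the adjugate output of the Faddeev–Leverrier algorithm.) -/
open Polynomial Matrix in
theorem jac {R : Type*} [CommRing R] {n : ℕ} (A : Matrix (Fin n) (Fin n) R) :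
    derivative A.charpoly = (adjugate (charmatrix A)).trace := by
  have h : ∀ i, adjugate (charmatrix A) i i = ∑ σ : Equiv.Perm (Fin n), Equiv.Perm.sign σ • ((∏ j ∈ Finset.univ.erase i, charmatrix A (σ j) j) * derivative (charmatrix A (σ i) i)) := by
    intro i
    rw [show adjugate (charmatrix A) i i = (adjugate (charmatrix A)ᵀ) i i by rw [← adjugate_transpose, transpose_apply], adjugate_apply, ← det_transpose, det_apply]
    refine Finset.sum_congr rfl fun σ _ => ?_
    rw [← Finset.mul_prod_erase _ _ (Finset.mem_univ i), mul_comm]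
    congr 2
    · refine Finset.prod_congr rfl fun j hj => ?_
      simp [updateRow_apply, Finset.ne_of_mem_erase hj]
    · by_cases hs : σ i = i
      · simp [hs, charmatrix_apply]
      · simp [hs, charmatrix_apply, updateRow_apply]
  simp only [trace, diag_apply, h]
  rw [Finset.sum_comm, charpoly, det_apply, derivative_sum]
  refine Finset.sum_congr rfl fun σ _ => ?_
  rw [← Finset.smul_sum, ← derivative_prod_finset]
  simp [Units.smul_def]

open Polynomial Matrix in
theorem stmt10 {R : Type*} [CommRing R] [Algebra ℚ R] {n : ℕ} (hn : 1 ≤ n)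
    (A : Matrix (Fin n) (Fin n) R) (d : ℕ → R) (B : ℕ → Matrix (Fin n) (Fin n) R)
    (hdn : d n = 1) (hB0 : B 0 = 1)
    (hd : ∀ k, 1 ≤ k → k ≤ n →
      d (n - k) = -((k : ℚ)⁻¹ • Matrix.trace (A * B (k - 1))))
    (hB : ∀ k, 1 ≤ k → k ≤ n → B k = A * B (k - 1) + d (n - k) • 1) :
    A.adjugate = ((-1 : R) ^ (n + 1)) • B (n - 1) := by
  nontriviality R
  obtain ⟨N, hN⟩ : ∃ N, N = matPolyEquiv (adjugate (charmatrix A)) := ⟨_, rfl⟩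
  have hmul : (X - C A) * N = Polynomial.map (algebraMap R (Matrix (Fin n) (Fin n) R)) A.charpoly := by
    rw [hN, ← matPolyEquiv_charmatrix, ← map_mul, mul_adjugate, ← matPolyEquiv_smul_one, charpoly]
  have hs : ∀ k, N.coeff k = A * N.coeff (k + 1) + A.charpoly.coeff (k + 1) • 1 := by
    intro k
    have := congrArg (fun q => q.coeff (k + 1)) hmul
    simp only [coeff_X_sub_C_mul, coeff_map, Algebra.algebraMap_eq_smul_one] at this
    rw [← this]; abel
  have h0 : A * N.coeff 0 = - (A.charpoly.coeff 0 • 1) := by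
    have := congrArg (fun q => q.coeff 0) hmul
    simp only [sub_mul, coeff_sub, coeff_X_mul_zero, coeff_C_mul, coeff_map, Algebra.algebraMap_eq_smul_one] at this
    rw [← this]; abel
  have hdeg : A.charpoly.natDegree = n := by simp
  have hpn : A.charpoly.coeff n = 1 := by
    have := A.charpoly_monic.coeff_natDegree
    rwa [hdeg] at this
  have hz : ∀ m k, n ≤ k → N.natDegree < k + m → N.coeff k = 0 := by
    intro m
    induction m with
    | zero => intro k _ h; exact coeff_eq_zero_of_natDegree_lt (by simpa using h)
    | succ m ih =>
      intro k hk h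
      rw [hs, ih (k + 1) (by omega) (by omega), coeff_eq_zero_of_natDegree_lt (p := A.charpoly) (by omega)]
      simp
  have hNn : N.coeff n = 0 := hz (N.natDegree + 1) n le_rfl (by omega)
  have htr : ∀ k, (N.coeff k).trace = A.charpoly.coeff (k + 1) * ((k : R) + 1) := by
    intro k
    rw [← coeff_derivative, jac, hN]
    simp [trace, matPolyEquiv_coeff_apply]
  have htA : ∀ j, (A * N.coeff j).trace = ((j : R) - n) * A.charpoly.coeff j := by
    intro j
    cases j with
    | zero => rw [h0]; simp [mul_comm]
    | succ j =>
      have h1 := htr j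
      rw [hs j, trace_add, trace_smul, trace_one] at h1
      simp only [Fintype.card_fin, smul_eq_mul] at h1
      push_cast
      linear_combination h1
  have key : ∀ k, k < n → B k = N.coeff (n - 1 - k) := by
    intro k
    induction k with
    | zero =>
      intro _
      rw [hs, hB0, Nat.sub_zero, Nat.sub_add_cancel hn, hNn, hpn]; simp
    | succ k ih =>
      intro hk
      have hik := ih (by omega)
      have e : n - 1 - k = n - (k + 1) := by omega
      have e2 : n - 1 - (k + 1) + 1 = n - (k + 1) := by omega
      have hdk : d (n - (k + 1)) = A.charpoly.coeff (n - (k + 1)) := by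
        rw [hd (k + 1) (by omega) hk.le, Nat.add_sub_cancel, hik, e, htA, Nat.cast_sub hk.le]
        have : ((n : R) - ((k + 1 : ℕ) : R) - n) * A.charpoly.coeff (n - (k + 1)) = - (((k + 1 : ℕ) : ℚ) • A.charpoly.coeff (n - (k + 1))) := by
          rw [Algebra.smul_def, map_natCast]; ring
        rw [this, smul_neg, neg_neg, smul_smul, inv_mul_cancel₀ (by positivity), one_smul]
      rw [hB (k + 1) (by omega) hk.le, hs, e2, hdk, Nat.add_sub_cancel, hik, e]
  rw [key (n - 1) (by omega), Nat.sub_self]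
  have hN0 : N.coeff 0 = adjugate (-A) := by
    have h1 := RingHom.map_adjugate (evalRingHom (0 : R)) (charmatrix A)
    have h2 : (evalRingHom (0 : R)).mapMatrix (charmatrix A) = -A := by
      ext i j
      by_cases h : i = j
      · subst h; simp
      · simp [charmatrix_apply_ne _ _ _ h]
    rw [h2] at h1
    rw [← h1, hN]
    ext i j
    rw [matPolyEquiv_coeff_apply]
    simp [coeff_zero_eq_eval_zero]
  rw [hN0, ← neg_one_smul R A, adjugate_smul, smul_smul, Fintype.card_fin, ← pow_add,
    show n + 1 + (n - 1) = 2 * n by omega, pow_mul]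
  simp
end

section
/- Let R be a commutative ℚ-algebra, n ≥ 1, and A an n×n matrix over R. Define sequences recursively by d_n = 1, B'_0 = I, and for 1 ≤ k ≤ n: d_{n−k} = −(1/k)·Tr(A·B'_{k−1}) and B'_k = A·B'_{k−1} + d_{n−k}·I. Then det(A) = (−1)^n·d_0 = ((−1)^{n+1}/n)·Tr(A·B'_{n−1}). (Correctness of the determinant output of the Faddeev–Leverrier algorithm.) -/
open Polynomial in
theorem aux_deriv_det {R : Type*} [CommRing R] {n : ℕ} (M : Matrix (Fin n) (Fin n) R[X]) :
    derivative M.det = ∑ i, (M.updateRow i (fun j => derivative (M i j))).det := by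
  have h1 : ∀ i, (M.updateRow i (fun j => derivative (M i j))).det =
      ∑ σ : Equiv.Perm (Fin n), ((Equiv.Perm.sign σ : ℤ) : R[X]) *
        ((∏ a ∈ Finset.univ.erase i, M a (σ a)) * derivative (M i (σ i))) := by
    intro i
    rw [← Matrix.det_transpose, Matrix.det_apply']
    refine Finset.sum_congr rfl fun σ _ => ?_
    congr 1
    rw [← Finset.prod_erase_mul _ _ (Finset.mem_univ i)]
    congr 1
    · refine Finset.prod_congr rfl fun a ha => ?_
      simp [Matrix.updateRow_apply, Finset.ne_of_mem_erase ha]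
    · simp
  simp_rw [h1]
  rw [Finset.sum_comm, ← Matrix.det_transpose, Matrix.det_apply', derivative_sum]
  refine Finset.sum_congr rfl fun σ _ => ?_
  rw [← Finset.mul_sum, derivative_mul, derivative_intCast, zero_mul, zero_add,
    Polynomial.derivative_prod_finset]
  rfl

open Polynomial in
theorem aux_deriv_charpoly {R : Type*} [CommRing R] {n : ℕ} (A : Matrix (Fin n) (Fin n) R) :
    derivative A.charpoly = A.charmatrix.adjugate.trace := by
  rw [Matrix.charpoly, aux_deriv_det, Matrix.trace]
  refine Finset.sum_congr rfl fun i _ => ?_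
  rw [Matrix.diag_apply, Matrix.adjugate_apply]
  congr 2
  ext1 j
  by_cases h : i = j
  · subst h; simp [Matrix.charmatrix_apply_eq]
  · simp [Matrix.charmatrix_apply_ne _ _ _ h, Pi.single_apply, Ne.symm h]

open Polynomial in
theorem aux_rec {R : Type*} [CommRing R] {n : ℕ} (A : Matrix (Fin n) (Fin n) R) (m : ℕ) :
    A.charmatrix.adjugate.map (fun p => p.coeff m) =
      A * A.charmatrix.adjugate.map (fun p => p.coeff (m+1)) + A.charpoly.coeff (m+1) • 1 := by
  have h := Matrix.mul_adjugate A.charmatrix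
  ext i j
  have h2 := congrArg (fun M => (M i j).coeff (m+1)) h
  simp only [Matrix.charmatrix, sub_mul] at h2
  rw [Matrix.sub_apply, Matrix.scalar_apply, Matrix.diagonal_mul, coeff_sub,
    coeff_X_mul, Matrix.mul_apply, finsetSum_coeff] at h2
  simp only [RingHom.mapMatrix_apply, Matrix.map_apply, coeff_C_mul] at h2
  rw [Matrix.add_apply, Matrix.mul_apply, Matrix.map_apply]
  simp only [Matrix.map_apply]
  rw [sub_eq_iff_eq_add] at h2
  simp only [Matrix.charmatrix, RingHom.mapMatrix_apply, Matrix.scalar_apply] at h2 ⊢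
  rw [h2, add_comm]
  congr 1
  by_cases hij : i = j
  · subst hij; simp [Matrix.charpoly, Matrix.charmatrix]
  · simp [Matrix.one_apply, hij]

open Polynomial in
theorem aux_rec0 {R : Type*} [CommRing R] {n : ℕ} (A : Matrix (Fin n) (Fin n) R) :
    A * A.charmatrix.adjugate.map (fun p => p.coeff 0) = (-A.charpoly.coeff 0) • 1 := by
  have h := Matrix.mul_adjugate A.charmatrix
  ext i j
  have h2 := congrArg (fun M => (M i j).coeff 0) h
  simp only [Matrix.charmatrix, sub_mul] at h2
  rw [Matrix.sub_apply, Matrix.scalar_apply, Matrix.diagonal_mul, coeff_sub,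
    mul_coeff_zero, coeff_X_zero, zero_mul, zero_sub, Matrix.mul_apply, finsetSum_coeff] at h2
  simp only [RingHom.mapMatrix_apply, Matrix.map_apply, coeff_C_mul] at h2
  rw [Matrix.mul_apply]
  simp only [Matrix.map_apply]
  rw [neg_eq_iff_eq_neg] at h2
  simp only [Matrix.charmatrix, RingHom.mapMatrix_apply, Matrix.scalar_apply] at h2 ⊢
  rw [h2]
  by_cases hij : i = j
  · subst hij; simp [Matrix.charpoly, Matrix.charmatrix]
  · simp [Matrix.one_apply, hij]

open Polynomial in
theorem aux_zero {R : Type*} [CommRing R] [Nontrivial R] {n : ℕ} (A : Matrix (Fin n) (Fin n) R) :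
    A.charmatrix.adjugate.map (fun p => p.coeff n) = 0 := by
  obtain ⟨N, hN⟩ : ∃ N, ∀ m ≥ N, A.charmatrix.adjugate.map (fun p => p.coeff m) = 0 := by
    refine ⟨(∑ i, ∑ j, (A.charmatrix.adjugate i j).natDegree) + 1, fun m hm => ?_⟩
    ext i j
    refine coeff_eq_zero_of_natDegree_lt (lt_of_lt_of_le (Nat.lt_succ_of_le ?_) hm)
    exact (Finset.single_le_sum (f := fun j => (A.charmatrix.adjugate i j).natDegree)
      (fun _ _ => Nat.zero_le _) (Finset.mem_univ j)).trans
      (Finset.single_le_sum (f := fun i => ∑ j, (A.charmatrix.adjugate i j).natDegree)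
      (fun _ _ => Nat.zero_le _) (Finset.mem_univ i))
  have key : ∀ t m, n ≤ m → N ≤ m + t → A.charmatrix.adjugate.map (fun p => p.coeff m) = 0 := by
    intro t
    induction t with
    | zero => intro m _ h; exact hN m h
    | succ t ih =>
      intro m h1 h2
      rw [aux_rec, ih (m+1) (by omega) (by omega), coeff_eq_zero_of_natDegree_lt]
      · simp
      · rw [Matrix.charpoly_natDegree_eq_dim, Fintype.card_fin]; omega
  exact key N n le_rfl (by omega)

open Polynomial in
theorem stmt11 {R : Type*} [CommRing R] [Algebra ℚ R] {n : ℕ} (hn : 1 ≤ n)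
    (A : Matrix (Fin n) (Fin n) R) (d : ℕ → R) (B : ℕ → Matrix (Fin n) (Fin n) R)
    (hdn : d n = 1) (hB0 : B 0 = 1)
    (hd : ∀ k, 1 ≤ k → k ≤ n →
      d (n - k) = -((k : ℚ)⁻¹ • Matrix.trace (A * B (k - 1))))
    (hB : ∀ k, 1 ≤ k → k ≤ n → B k = A * B (k - 1) + d (n - k) • 1) :
    A.det = (-1 : R) ^ n * d 0 ∧
      A.det = (n : ℚ)⁻¹ • ((-1 : R) ^ (n + 1) * Matrix.trace (A * B (n - 1))) := by
  cases subsingleton_or_nontrivial R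
  · exact ⟨Subsingleton.elim _ _, Subsingleton.elim _ _⟩
  have htr : ∀ m, (A.charmatrix.adjugate.map (fun p => p.coeff m)).trace =
      A.charpoly.coeff (m+1) * (m+1) := by
    intro m
    rw [← coeff_derivative, aux_deriv_charpoly, Matrix.trace, Matrix.trace, finsetSum_coeff]
    rfl
  -- coefficient formula
  have hc : ∀ k, 1 ≤ k → k ≤ n → A.charpoly.coeff (n - k) = -((k : ℚ)⁻¹ • Matrix.trace
      (A * A.charmatrix.adjugate.map (fun p => p.coeff (n - k)))) := by
    intro k h1 h2
    have hk : (k : ℚ) ≠ 0 := by positivity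
    have e : Matrix.trace (A * A.charmatrix.adjugate.map (fun p => p.coeff (n - k))) =
        -((k : R) * A.charpoly.coeff (n - k)) := by
      rcases Nat.eq_or_lt_of_le h2 with h | h
      · subst h
        rw [Nat.sub_self, aux_rec0, Matrix.trace_smul, Matrix.trace_one, Fintype.card_fin,
          smul_eq_mul]
        ring
      · obtain ⟨m, hm⟩ : ∃ m, n - k = m + 1 := ⟨n - k - 1, by omega⟩
        have := congrArg Matrix.trace (aux_rec A m)
        rw [htr, Matrix.trace_add, Matrix.trace_smul, Matrix.trace_one, Fintype.card_fin,
          smul_eq_mul] at this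
        have hnn : (n : R) = k + (m + 1) := by
          have : n = k + (m + 1) := by omega
          rw [this]; push_cast; ring
        rw [hnn] at this
        rw [hm]
        linear_combination -this
    rw [e, smul_neg, neg_neg, ← nsmul_eq_mul, ← Nat.cast_smul_eq_nsmul ℚ, smul_smul,
      inv_mul_cancel₀ hk, one_smul]
  have hmain : ∀ k, k + 1 ≤ n →
      B k = A.charmatrix.adjugate.map (fun p => p.coeff (n - (k + 1))) := by
    intro k
    induction k with
    | zero =>
      intro h
      rw [hB0, aux_rec, show n - (0 + 1) + 1 = n by omega, aux_zero]
      have := A.charpoly_monic.coeff_natDegree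
      rw [Matrix.charpoly_natDegree_eq_dim, Fintype.card_fin] at this
      simp [this]
    | succ k ih =>
      intro h
      have ih := ih (by omega)
      rw [hB (k+1) (by omega) (by omega), hd (k+1) (by omega) (by omega), aux_rec,
        show n - (k + 1 + 1) + 1 = n - (k + 1) by omega, hc (k+1) (by omega) (by omega),
        Nat.add_sub_cancel, ih]
  have h0 : d 0 = A.charpoly.coeff 0 := by
    have h1 := hd n hn le_rfl
    have h2 := hc n hn le_rfl
    rw [hmain (n-1) (by omega), show n - (n - 1 + 1) = n - n by omega] at h1
    rw [← h2] at h1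
    simpa using h1
  have hdet : A.det = (-1 : R) ^ n * d 0 := by
    rw [h0, Matrix.det_eq_sign_charpoly_coeff, Fintype.card_fin]
  refine ⟨hdet, ?_⟩
  have h1 := hd n hn le_rfl
  rw [Nat.sub_self] at h1
  rw [hdet, h1, ← mul_smul_comm, pow_succ]
  simp
end
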